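/- Let t and f be natural numbers with 0 < f ≤ t, and let V be a multiset of n = 3t+1 values (over an arbitrary type with decidable equality). Denote by max_mult(V) the maximum multiplicity of any element of V. If max_mult(V) < 2t + 1 + f (i.e., max_mult(V) − f < 2t+1), then there exists a multiset M contained in V (M ≤ V) such that the cardinality of M is n − t − f = 2t + 1 − f and max_mult(M) ≤ t. -/

import Mathlib

/-- The maximum multiplicity of any element of a multiset
(0 for the empty multiset). -/
def maxMult {α : Type*} [DecidableEq α] (V : Multiset α) : ℕ :=
  V.toFinset.sup V.count

theorem stmt_0 {α : Type*} [DecidableEq α] (t f : ℕ) (V : Multiset α)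
    (hf_pos : 0 < f) (hft : f ≤ t)
    (hcard : Multiset.card V = 3 * t + 1)
    (hmax : maxMult V < 2 * t + 1 + f) :
    ∃ M : Multiset α, M ≤ V ∧ Multiset.card M = 2 * t + 1 - f ∧ maxMult M ≤ t := by
  suffices h : ∃ W : Multiset α, W ≤ V ∧ 2 * t + 1 - f ≤ Multiset.card W ∧
      ∀ x, W.count x ≤ t by
    obtain ⟨W, hWV, hc, hx⟩ := h
    obtain ⟨M, hM, hMc⟩ : ∃ M ≤ W, Multiset.card M = 2 * t + 1 - f := by
      have hp : 0 < Multiset.card (Multiset.powersetCard (2 * t + 1 - f) W) := by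
        rw [Multiset.card_powersetCard]
        exact Nat.choose_pos hc
      obtain ⟨M, hM⟩ := Multiset.card_pos_iff_exists_mem.mp hp
      exact ⟨M, Multiset.mem_powersetCard.mp hM⟩
    refine ⟨M, hM.trans hWV, hMc, ?_⟩
    unfold maxMult
    exact Finset.sup_le fun x _ => (Multiset.count_le_of_le x hM).trans (hx x)
  by_cases h1 : ∀ x, V.count x ≤ t
  · exact ⟨V, le_rfl, by omega, h1⟩
  push Not at h1
  obtain ⟨a, ha⟩ := h1
  have hamax : V.count a ≤ maxMult V := by
    unfold maxMult
    apply Finset.le_sup (f := fun x => V.count x)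
    rw [Multiset.mem_toFinset, ← Multiset.count_pos]
    omega
  by_cases h2 : ∃ b, b ≠ a ∧ t < V.count b
  · obtain ⟨b, hba, hb⟩ := h2
    refine ⟨Multiset.replicate t a + Multiset.replicate t b, ?_, ?_, ?_⟩
    · rw [Multiset.le_iff_count]
      intro x
      simp only [Multiset.count_add, Multiset.count_replicate]
      split_ifs <;> grind
    · simp only [Multiset.card_add, Multiset.card_replicate]
      omega
    · intro x
      simp only [Multiset.count_add, Multiset.count_replicate]
      split_ifs <;> grind
  · push Not at h2
    refine ⟨Multiset.replicate t a + V.filter (fun x => ¬ a = x), ?_, ?_, ?_⟩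
    · rw [Multiset.le_iff_count]
      intro x
      simp only [Multiset.count_add, Multiset.count_replicate, Multiset.count_filter]
      split_ifs <;> grind
    · have h3 := congrArg Multiset.card (Multiset.filter_add_not (fun x => a = x) V)
      rw [Multiset.card_add, Multiset.filter_eq, Multiset.card_replicate] at h3
      simp only [Multiset.card_add, Multiset.card_replicate]
      omega
    · intro x
      simp only [Multiset.count_add, Multiset.count_replicate, Multiset.count_filter]
      split_ifs <;> grind
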